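/- Let M be a nondegenerate Orlicz function. Suppose there exists η > 0 such that lim_{t→0} M(ηt)/M(t) = 0. Then the Orlicz sequence space h_M is isomorphic to a closed subspace of C(ω^ω). -/

import Mathlib

open Ordinal Filter Topology

/-- Membership in the Orlicz sequence space `h_M` : `Σₖ M (c * |aₖ|) < ∞` for every
`c < ∞`. -/
def MemHM (M : ℝ → ℝ) (a : ℕ → ℝ) : Prop :=
  ∀ c : ℝ, Summable fun k => M (c * |a k|)

/-- The Orlicz norm `‖a‖_M = inf { ρ > 0 : Σₖ M (|aₖ| / ρ) ≤ 1 }`. -/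
noncomputable def orliczNorm (M : ℝ → ℝ) (a : ℕ → ℝ) : ℝ :=
  sInf {ρ : ℝ | 0 < ρ ∧ (∑' k, M (|a k| / ρ)) ≤ 1}

/-- `M` is a nondegenerate Orlicz function : increasing and convex on `[0, ∞)` with
`M 0 = 0`, `M 1 = 1`, and `M t > 0` for all `t > 0`. -/
structure IsOrlicz (M : ℝ → ℝ) : Prop where
  mono : MonotoneOn M (Set.Ici 0)
  convex : ConvexOn ℝ (Set.Ici 0) M
  zero : M 0 = 0
  one : M 1 = 1
  pos : ∀ t : ℝ, 0 < t → 0 < M t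

/-- `C(α)` : the Banach space of continuous real functions on the compact space
`α + 1 = [0, α]` (every continuous function on a compact space is bounded, so this is
the space of bounded continuous functions on `[0, α]` with the sup norm). -/
noncomputable abbrev COrd (α : Ordinal) : Type 2 :=
  BoundedContinuousFunction ↥(Set.Iic α) ℝ

/-- `h_M` embeds isomorphically into `C(α)` : there is a map `T`, linear on `h_M`,
which is bounded above and below with respect to the Orlicz norm. -/
noncomputable def EmbedsHM (M : ℝ → ℝ) (α : Ordinal) : Prop :=
  ∃ T : (ℕ → ℝ) → COrd α,
    (∀ a b : ℕ → ℝ, MemHM M a → MemHM M b → T (a + b) = T a + T b) ∧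
    (∀ (c : ℝ) (a : ℕ → ℝ), MemHM M a → T (c • a) = c • T a) ∧
    ∃ c₁ > (0 : ℝ), ∃ c₂ > (0 : ℝ), ∀ a : ℕ → ℝ, MemHM M a →
      c₁ * orliczNorm M a ≤ ‖T a‖ ∧ ‖T a‖ ≤ c₂ * orliczNorm M a

/-!
By Young's inequality `M t / t * b ≤ M t + M b`, the functionals `g` with entries
`± M (t k) / (2 * t k)`, where `∑ M (t k) ≤ 1`, lie in the unit ball of the dual of `h_M`; they
norm `h_M` up to a constant even if each `t k` is only a power of `1 / 2` comparable to `|b k|`.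

The growth hypothesis yields a dilation `B` and thresholds `τ i ≤ 2 ^ (-i - 2)` such that
`M (B * s) ≥ 2 ^ (i + 2) * M s` for `s` below `τ 0, …, τ (i - 1)`. Let `∑ M |b k| > 1`. The entries
with `|b k| < τ k` contribute at most `1 / 2`, and the others split into levels according to the
first threshold `τ i ≤ |b k|`, so that `i ≤ k`. Some level `i` contributes more than
`2 ^ (-i - 2)`, so after dilation by `B` it alone is outside the unit ball. Hence `b` is normed by
a functional of level `i`: it has no entry before index `i`, and as `t k ≥ τ i` its entries take
finitely many values and at most `1 / M (τ i)` of them are nonzero.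

For fixed `i` these functionals form a hereditary family in which the number of nonzero entries is
bounded, hence a continuous image of an interval `[0, ω ^ n]`. As `i` grows the families accumulate
only at `0`, so together they form a continuous image of `[0, ω ^ ω]`, and `h_M` acts on it by
evaluation.
-/

universe v

section OrdinalImage

variable {X : Type*} [TopologicalSpace X]

/-- `K` is a continuous image of the ordinal interval `(0, α]`. Half-open intervals are used
because they concatenate: `(0, α + β]` is the disjoint union of the clopen sets `(0, α]` and
`(α, α + β]`. -/
def IsOrdinalImage (α : Ordinal) (K : Set X) : Prop :=
  ∃ Φ : Ordinal → X, ContinuousOn Φ (Set.Ioc 0 α) ∧ Φ '' Set.Ioc 0 α = K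

theorem ordinal_isOpen_Ioc (a b : Ordinal) : IsOpen (Set.Ioc a b) := by
  rw [← Set.Ioo_succ_right_eq_Ioc]
  exact isOpen_Ioo

theorem ordinal_continuous_sub_left (a : Ordinal) : Continuous (fun x : Ordinal => x - a) := by
  refine OrderTopology.continuous_iff.2 fun c => ⟨?_, ?_⟩
  · convert! isOpen_Ioi (a := a + c) using 1
    exact Set.ext fun x => Ordinal.lt_sub
  · rcases eq_or_ne c 0 with rfl | hc
    · simp
    · convert! isOpen_Iio (a := a + c) using 1
      refine Set.ext fun x => ?_
      rcases le_total a x with h | h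
      · exact Ordinal.sub_lt_of_le h
      · have hlt : x < a + c := h.trans_lt ((lt_add_iff_pos_right a).2 (pos_iff_ne_zero.2 hc))
        simpa [Ordinal.sub_eq_zero_iff_le.2 h, pos_iff_ne_zero, hc] using hlt

theorem ordinal_image_sub_Ioc (a β : Ordinal) :
    (fun x => x - a) '' Set.Ioc a (a + β) = Set.Ioc 0 β := by
  refine Set.Subset.antisymm ?_ fun y hy =>
    ⟨a + y, ⟨(lt_add_iff_pos_right a).2 hy.1, by gcongr; exact hy.2⟩, Ordinal.add_sub_cancel a y⟩
  rintro _ ⟨x, hx, rfl⟩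
  exact ⟨Ordinal.lt_sub.2 (by simpa using hx.1), Ordinal.sub_le.2 hx.2⟩

theorem exists_mem_Ioc_succ {L : Type*} [LinearOrder L] {u : ℕ → L} {x : L} (h₀ : u 0 < x)
    (hx : ∃ m, x ≤ u m) : ∃ m, x ∈ Set.Ioc (u m) (u (m + 1)) := by
  obtain ⟨m, hm, hm'⟩ := Nat.exists_not_and_succ_of_not_zero_of_exists
    (p := fun m => x ≤ u m) h₀.not_ge hx
  exact ⟨m, not_le.1 hm, hm'⟩

theorem exists_continuousOn_glue {u : ℕ → Ordinal} {α : Ordinal} (hu : Monotone u)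
    (hlt : ∀ m, u m < α) (hcof : ∀ x < α, ∃ m, x ≤ u m) {G : ℕ → Ordinal → X} {x₀ : X}
    (hG : ∀ m, ContinuousOn (G m) (Set.Ioc (u m) (u (m + 1))))
    (hlim : Tendsto (fun m => G m '' Set.Ioc (u m) (u (m + 1))) atTop (𝓝 x₀).smallSets) :
    ∃ Φ : Ordinal → X, ContinuousOn Φ (Set.Ioc (u 0) α) ∧ Φ α = x₀ ∧
      ∀ m, Set.EqOn Φ (G m) (Set.Ioc (u m) (u (m + 1))) := by
  classical
  let Φ : Ordinal → X := fun x =>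
    if h : ∃ m, x ∈ Set.Ioc (u m) (u (m + 1)) then G h.choose x else x₀
  have hΦG (m : ℕ) : Set.EqOn Φ (G m) (Set.Ioc (u m) (u (m + 1))) := fun x hx => by
    have h : ∃ m, x ∈ Set.Ioc (u m) (u (m + 1)) := ⟨m, hx⟩
    have hm : h.choose = m := by
      by_contra hne
      exact Set.disjoint_left.1 (hu.pairwise_disjoint_on_Ioc_succ hne) h.choose_spec hx
    simp only [Φ, dif_pos h, hm]
  have hΦα : Φ α = x₀ := dif_neg fun ⟨m, hm⟩ => hm.2.not_gt (hlt (m + 1))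
  refine ⟨Φ, fun x hx => ContinuousAt.continuousWithinAt ?_, hΦα, hΦG⟩
  rcases hx.2.eq_or_lt with rfl | hxα
  · intro U hU
    rw [hΦα] at hU
    rw [mem_map]
    obtain ⟨N, hN⟩ := eventually_atTop.1 (tendsto_smallSets_iff.1 hlim U hU)
    refine mem_of_superset ((ordinal_isOpen_Ioc (u N) x).mem_nhds ⟨hlt N, le_rfl⟩) fun y hy => ?_
    rcases hy.2.eq_or_lt with rfl | hyx
    · exact Set.mem_preimage.2 (hΦα ▸ mem_of_mem_nhds hU)
    · obtain ⟨m, hm⟩ := exists_mem_Ioc_succ ((hu N.zero_le).trans_lt hy.1) (hcof y hyx)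
      have hNm : N ≤ m := by
        by_contra! h
        exact (hm.2.trans (hu h)).not_gt hy.1
      exact hN m hNm ⟨y, hm, (hΦG m hm).symm⟩
  · obtain ⟨m, hm⟩ := exists_mem_Ioc_succ hx.1 (hcof x hxα)
    exact ((hG m).congr (hΦG m)).continuousAt ((ordinal_isOpen_Ioc _ _).mem_nhds hm)

namespace IsOrdinalImage

theorem exists_translate {β : Ordinal} {K : Set X} (hK : IsOrdinalImage β K) (a : Ordinal) :
    ∃ G : Ordinal → X, ContinuousOn G (Set.Ioc a (a + β)) ∧ G '' Set.Ioc a (a + β) = K := by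
  obtain ⟨Φ, hΦ, rfl⟩ := hK
  refine ⟨fun x => Φ (x - a), ?_, ?_⟩
  · refine hΦ.comp (ordinal_continuous_sub_left a).continuousOn (Set.mapsTo_iff_image_subset.2 ?_)
    exact (ordinal_image_sub_Ioc a β).subset
  · rw [← ordinal_image_sub_Ioc a β, Set.image_image]

theorem singleton {α : Ordinal} (hα : α ≠ 0) (x : X) : IsOrdinalImage α {x} :=
  ⟨fun _ => x, continuousOn_const,
    (Set.nonempty_Ioc.2 (pos_iff_ne_zero.2 hα)).image_const x⟩

theorem image {Y : Type*} [TopologicalSpace Y] {α : Ordinal} {K : Set X}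
    (hK : IsOrdinalImage α K) {f : X → Y} (hf : Continuous f) : IsOrdinalImage α (f '' K) := by
  obtain ⟨Φ, hΦ, rfl⟩ := hK
  exact ⟨f ∘ Φ, hf.comp_continuousOn hΦ, Set.image_comp f Φ _⟩

theorem exists_continuousMap {α : Ordinal} (hα : α ≠ 0) {K : Set X} (hK : IsOrdinalImage α K) :
    ∃ Φ : C(Set.Iic α, X), Set.range Φ = K := by
  obtain ⟨Φ, hΦ, rfl⟩ := hK
  have h1 : 1 ≤ α := Order.one_le_iff_ne_zero.2 hα
  refine ⟨⟨fun x => Φ (max 1 x), hΦ.comp_continuous (by fun_prop) fun x =>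
    ⟨zero_lt_one.trans_le (le_max_left _ _), max_le h1 x.2⟩⟩, ?_⟩
  refine Set.Subset.antisymm ?_ ?_
  · rintro _ ⟨x, rfl⟩
    exact ⟨max 1 x, ⟨zero_lt_one.trans_le (le_max_left _ _), max_le h1 x.2⟩, rfl⟩
  · rintro _ ⟨x, hx, rfl⟩
    exact ⟨⟨x, hx.2⟩, congrArg Φ (max_eq_right (Order.one_le_iff_pos.2 hx.1))⟩

theorem insert_iUnion {u β : ℕ → Ordinal} {α : Ordinal} (h₀ : u 0 = 0)
    (hsucc : ∀ m, u (m + 1) = u m + β m) (hlt : ∀ m, u m < α) (hcof : ∀ x < α, ∃ m, x ≤ u m)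
    {K : ℕ → Set X} {x₀ : X} (hK : ∀ m, IsOrdinalImage (β m) (K m))
    (hlim : Tendsto K atTop (𝓝 x₀).smallSets) :
    IsOrdinalImage α (insert x₀ (⋃ m, K m)) := by
  have hu : Monotone u := monotone_nat_of_le_succ fun m => by rw [hsucc]; exact le_self_add
  choose G hG hGK using fun m => (hK m).exists_translate (u m)
  simp only [← hsucc] at hG hGK
  obtain ⟨Φ, hΦ, hΦα, hΦG⟩ := exists_continuousOn_glue hu hlt hcof hG (by simpa only [hGK])
  rw [h₀] at hΦ
  refine ⟨Φ, hΦ, Set.Subset.antisymm ?_ ?_⟩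
  · rintro _ ⟨x, hx, rfl⟩
    rcases hx.2.eq_or_lt with rfl | hxα
    · exact Or.inl hΦα
    · obtain ⟨m, hm⟩ := exists_mem_Ioc_succ (h₀ ▸ hx.1) (hcof x hxα)
      exact Or.inr (Set.mem_iUnion.2 ⟨m, hGK m ▸ ⟨x, hm, (hΦG m hm).symm⟩⟩)
  · refine Set.insert_subset ⟨α, ⟨zero_le.trans_lt (hlt 0), le_rfl⟩, hΦα⟩
      (Set.iUnion_subset fun m => ?_)
    rw [← hGK m, ← (hΦG m).image_eq]
    exact Set.image_mono fun x hx => ⟨zero_le.trans_lt hx.1, hx.2.trans (hlt (m + 1)).le⟩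

theorem mul_omega0 {α : Ordinal} (hα : α ≠ 0) {ι : Type*} [Countable ι] [Infinite ι]
    {K : ι → Set X} {x₀ : X} (hK : ∀ i, (K i).Nonempty → IsOrdinalImage α (K i))
    (hlim : Tendsto K cofinite (𝓝 x₀).smallSets) :
    IsOrdinalImage (α * ω) (insert x₀ (⋃ i, K i)) := by
  classical
  obtain ⟨_⟩ := nonempty_denumerable ι
  let e : ℕ ≃ ι := (Denumerable.eqv ι).symm
  let K' (i : ι) : Set X := if (K i).Nonempty then K i else {x₀}
  have hK' (i : ι) : IsOrdinalImage α (K' i) := by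
    by_cases h : (K i).Nonempty
    · simpa only [K', if_pos h] using hK i h
    · simpa only [K', if_neg h] using singleton hα x₀
  have hK'sub (i : ι) : K i ⊆ K' i ∧ K' i ⊆ insert x₀ (K i) := by
    by_cases h : (K i).Nonempty <;> simp_all [K', Set.not_nonempty_iff_eq_empty]
  have hlim' : Tendsto K' cofinite (𝓝 x₀).smallSets := by
    refine tendsto_smallSets_iff.2 fun U hU => ?_
    filter_upwards [tendsto_smallSets_iff.1 hlim U hU] with i hi
    exact (hK'sub i).2.trans (Set.insert_subset (mem_of_mem_nhds hU) hi)
  have hunion : insert x₀ (⋃ i, K i) = insert x₀ (⋃ m, K' (e m)) := by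
    rw [e.surjective.iUnion_comp K']
    refine (Set.insert_subset_insert (Set.iUnion_mono fun i => (hK'sub i).1)).antisymm ?_
    refine Set.insert_subset (Set.mem_insert _ _) (Set.iUnion_subset fun i => ?_)
    exact (hK'sub i).2.trans (Set.insert_subset_insert (Set.subset_iUnion K i))
  rw [hunion]
  have hα' : 0 < α := pos_iff_ne_zero.2 hα
  refine insert_iUnion (u := fun m : ℕ => α * m) (by simp) (fun m => by simp [mul_add_one])
    (fun m => (mul_lt_mul_iff_right₀ hα').2 (natCast_lt_omega0 m)) (fun x hx => ?_)
    (fun m => hK' (e m))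
    (hlim'.comp (Nat.cofinite_eq_atTop ▸ e.injective.tendsto_cofinite))
  obtain ⟨y, hy, hxy⟩ := (lt_mul_iff_of_isSuccLimit isSuccLimit_omega0).1 hx
  obtain ⟨m, rfl⟩ := lt_omega0.1 hy
  exact ⟨m, hxy.le⟩

theorem omega0_opow_omega0 {n : ℕ → ℕ} (hn : ∀ m, m ≤ n m) {K : ℕ → Set X} {x₀ : X}
    (hK : ∀ m, IsOrdinalImage (ω ^ (n m : Ordinal.{v})) (K m))
    (hlim : Tendsto K atTop (𝓝 x₀).smallSets) :
    IsOrdinalImage (ω ^ (ω : Ordinal.{v})) (insert x₀ (⋃ m, K m)) := by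
  let u : ℕ → Ordinal.{v} := Nat.rec 0 fun m x => x + ω ^ (n m : Ordinal)
  have hsucc (m : ℕ) : u (m + 1) = u m + ω ^ (n m : Ordinal.{v}) := rfl
  have hlt (m : ℕ) : u m < ω ^ (ω : Ordinal.{v}) := by
    induction m with
    | zero => exact opow_pos _ omega0_pos
    | succ m ih =>
      exact isPrincipal_add_omega0_opow _ ih
        ((opow_lt_opow_iff_right one_lt_omega0).2 (natCast_lt_omega0 _))
  refine insert_iUnion rfl hsucc hlt (fun x hx => ?_) hK hlim
  obtain ⟨d, hd, hxd⟩ := (lt_opow_of_isSuccLimit omega0_ne_zero isSuccLimit_omega0).1 hx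
  obtain ⟨m, rfl⟩ := lt_omega0.1 hd
  refine ⟨m + 1, hxd.le.trans (le_trans ?_ le_add_self)⟩
  exact opow_le_opow_right omega0_pos (by exact_mod_cast hn m)

end IsOrdinalImage

end OrdinalImage

section Hereditary

variable {E : Type*} [Zero E]

/-- A family of sequences is hereditary if setting any entries of a member to `0` gives a
member. -/
def IsHereditary (𝓗 : Set (ℕ → E)) : Prop :=
  ∀ v ∈ 𝓗, ∀ s : Set ℕ, s.indicator v ∈ 𝓗

/-- The members of `𝓗` whose first nonzero entry is the value `d` at index `k`. -/
def branch (𝓗 : Set (ℕ → E)) (k : ℕ) (d : E) : Set (ℕ → E) :=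
  {v ∈ 𝓗 | (∀ j < k, v j = 0) ∧ v k = d ∧ d ≠ 0}

/-- The members of `branch 𝓗 k d`, for `d ≠ 0`, with the leading entry `d` removed. -/
def branchTail (𝓗 : Set (ℕ → E)) (k : ℕ) (d : E) : Set (ℕ → E) :=
  {w | Function.update w k d ∈ 𝓗 ∧ ∀ j ≤ k, w j = 0}

theorem image_update_branchTail {d : E} (hd : d ≠ 0) (𝓗 : Set (ℕ → E)) (k : ℕ) :
    (Function.update · k d) '' branchTail 𝓗 k d = branch 𝓗 k d := by
  refine Set.Subset.antisymm ?_ ?_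
  · rintro _ ⟨w, ⟨hw, hw0⟩, rfl⟩
    exact ⟨hw, fun j hj => by simp [hj.ne, hw0 j hj.le], by simp, hd⟩
  · rintro v ⟨hv, hv0, rfl, -⟩
    refine ⟨Function.update v k 0, ⟨by simpa using hv, fun j hj => ?_⟩, by simp⟩
    rcases hj.eq_or_lt with rfl | hj
    · simp
    · simp [hj.ne, hv0 j hj]

theorem encard_support_branchTail_add_one {𝓗 : Set (ℕ → E)} {k : ℕ} {d : E} (hd : d ≠ 0)
    {w : ℕ → E} (hw : w ∈ branchTail 𝓗 k d) :
    (Function.support w).encard + 1 = (Function.support (Function.update w k d)).encard := by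
  rw [Function.support_update_of_ne_zero w k hd,
    Set.encard_insert_of_notMem (by simp [hw.2 k le_rfl])]

namespace IsHereditary

variable {𝓗 : Set (ℕ → E)}

theorem zero_mem (h : IsHereditary 𝓗) (hne : 𝓗.Nonempty) : (0 : ℕ → E) ∈ 𝓗 := by
  obtain ⟨v, hv⟩ := hne
  simpa only [Set.indicator_empty'] using h v hv ∅

theorem branchTail (h : IsHereditary 𝓗) (k : ℕ) (d : E) : IsHereditary (branchTail 𝓗 k d) := by
  classical
  refine fun w hw s => ⟨?_, fun j hj => by simp [Set.indicator_apply, hw.2 j hj]⟩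
  convert! h _ hw.1 (insert k s) using 1
  ext j
  by_cases hj : j = k
  · simp [hj]
  · simp [Set.indicator_apply, hj]

theorem eq_insert_iUnion_branch (h : IsHereditary 𝓗) (hne : 𝓗.Nonempty) {D : Set E}
    (hD : ∀ v ∈ 𝓗, ∀ k, v k ∈ D) : 𝓗 = insert 0 (⋃ p : ℕ × D, branch 𝓗 p.1 p.2) := by
  classical
  refine Set.Subset.antisymm (fun v hv => ?_)
    (Set.insert_subset (h.zero_mem hne) (Set.iUnion_subset fun p v hv => hv.1))
  rcases eq_or_ne v 0 with rfl | hv0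
  · exact Set.mem_insert _ _
  · have hk := Function.ne_iff.1 hv0
    refine Or.inr (Set.mem_iUnion.2 ⟨(Nat.find hk, ⟨v (Nat.find hk), hD v hv _⟩), hv, ?_, rfl,
      Nat.find_spec hk⟩)
    exact fun j hj => not_not.1 (Nat.find_min hk hj)

end IsHereditary

variable [TopologicalSpace E]

theorem tendsto_smallSets_nhds_zero {ι : Type*} {l : Filter ι} {K : ι → Set (ℕ → E)} {r : ι → ℕ}
    (hr : Tendsto r l atTop) (hK : ∀ i, ∀ v ∈ K i, ∀ j < r i, v j = 0) :
    Tendsto K l (𝓝 0).smallSets := by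
  refine tendsto_smallSets_iff.2 fun U hU => ?_
  rw [nhds_pi] at hU
  obtain ⟨I, t, ht, hIU⟩ := mem_pi'.1 hU
  filter_upwards [hr.eventually_gt_atTop (I.sup id)] with i hi v hv
  refine hIU fun j hj => ?_
  rw [hK i v hv j ((Finset.le_sup (f := id) hj).trans_lt hi)]
  exact mem_of_mem_nhds (ht j)

theorem tendsto_branch (𝓗 : Set (ℕ → E)) {D : Set E} (hD : D.Finite) :
    Tendsto (fun p : ℕ × D => branch 𝓗 p.1 p.2) cofinite (𝓝 0).smallSets := by
  have := hD.to_subtype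
  refine tendsto_smallSets_nhds_zero (r := Prod.fst) ?_ fun p v hv => hv.2.1
  rw [← Nat.cofinite_eq_atTop]
  refine Tendsto.cofinite_of_finite_preimage_singleton fun k => ?_
  exact (Set.toFinite ({k} ×ˢ (Set.univ : Set D))).subset fun p hp => ⟨hp, trivial⟩

/-- Induction on `n`: up to their leading entries, the branches of `𝓗` are hereditary families with
one nonzero entry fewer, and they accumulate only at `0`. -/
theorem IsHereditary.isOrdinalImage {D : Set E} (hDfin : D.Finite) {n : ℕ} {𝓗 : Set (ℕ → E)}
    (h : IsHereditary 𝓗) (hne : 𝓗.Nonempty) (hD : ∀ v ∈ 𝓗, ∀ k, v k ∈ D)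
    (hcard : ∀ v ∈ 𝓗, (Function.support v).encard ≤ n) :
    IsOrdinalImage (ω ^ (n : Ordinal)) 𝓗 := by
  induction n generalizing 𝓗 with
  | zero =>
    have h𝓗 : 𝓗 = {0} := Set.eq_singleton_iff_nonempty_unique_mem.2
      ⟨hne, fun v hv => by simpa using hcard v hv⟩
    rw [h𝓗]
    exact IsOrdinalImage.singleton (opow_pos _ omega0_pos).ne' 0
  | succ n ih =>
    have hD0 : (0 : E) ∈ D := hD 0 (h.zero_mem hne) 0
    have := hDfin.to_subtype
    have : Nonempty D := ⟨⟨0, hD0⟩⟩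
    rw [Nat.cast_succ, opow_add, opow_one, h.eq_insert_iUnion_branch hne hD]
    refine IsOrdinalImage.mul_omega0 (opow_pos _ omega0_pos).ne' ?_ (tendsto_branch 𝓗 hDfin)
    rintro ⟨k, d⟩ ⟨v, hv⟩
    have hd : (d : E) ≠ 0 := hv.2.2.2
    rw [← image_update_branchTail hd] at hv ⊢
    refine (ih (h.branchTail k d) (Set.image_nonempty.1 ⟨v, hv⟩) (fun w hw j => ?_)
      fun w hw => ?_).image (continuous_id.update k continuous_const)
    · rcases eq_or_ne j k with rfl | hj
      · rwa [hw.2 j le_rfl]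
      · simpa [hj] using hD _ hw.1 j
    · have hle := hcard _ hw.1
      rw [← encard_support_branchTail_add_one hd hw, Nat.cast_succ] at hle
      exact (ENat.add_le_add_iff_right ENat.one_ne_top).1 hle

end Hereditary

section OrliczDuality

variable {M : ℝ → ℝ}

namespace IsOrlicz

theorem map_mul_le (hM : IsOrlicz M) {s t : ℝ} (hs : 0 ≤ s) (hs1 : s ≤ 1) (ht : 0 ≤ t) :
    M (s * t) ≤ s * M t := by
  simpa [hM.zero] using hM.convex.2 Set.self_mem_Ici (Set.mem_Ici.2 ht) (sub_nonneg.2 hs1) hs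
    (sub_add_cancel 1 s)

theorem nonneg (hM : IsOrlicz M) {t : ℝ} (ht : 0 ≤ t) : 0 ≤ M t :=
  hM.zero.symm.trans_le (hM.mono Set.self_mem_Ici ht ht)

theorem slope_mul_le (hM : IsOrlicz M) {t b : ℝ} (ht : 0 < t) (hb : 0 ≤ b) :
    M t / t * b ≤ M t + M b := by
  rcases le_total b t with h | h
  · calc M t / t * b ≤ M t / t * t := by have := hM.pos t ht; gcongr
      _ = M t := div_mul_cancel₀ _ ht.ne'
      _ ≤ M t + M b := le_add_of_nonneg_right (hM.nonneg hb)
  · have hb' : 0 < b := ht.trans_le h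
    have hle : M t ≤ t / b * M b := by
      simpa [hb'.ne'] using hM.map_mul_le (div_nonneg ht.le hb) ((div_le_one hb').2 h) hb
    calc M t / t * b ≤ t / b * M b / t * b := by gcongr
      _ = M b := by field_simp
      _ ≤ M t + M b := le_add_of_nonneg_left (hM.nonneg ht.le)

end IsOrlicz

theorem MemHM.summable_div {a : ℕ → ℝ} (ha : MemHM M a) (ρ : ℝ) :
    Summable fun k => M (|a k| / ρ) := by
  simpa only [div_eq_inv_mul] using ha ρ⁻¹

theorem orliczNorm_le {a : ℕ → ℝ} {ρ : ℝ} (hρ : 0 < ρ) (h : ∑' k, M (|a k| / ρ) ≤ 1) :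
    orliczNorm M a ≤ ρ :=
  csInf_le ⟨0, fun _ hx => hx.1.le⟩ ⟨hρ, h⟩

theorem le_orliczNorm (hM : IsOrlicz M) {a : ℕ → ℝ} (ha : MemHM M a) {r : ℝ}
    (h : ∀ ρ > 0, ∑' k, M (|a k| / ρ) ≤ 1 → r ≤ ρ) : r ≤ orliczNorm M a := by
  refine le_csInf ?_ fun ρ hρ => h ρ hρ.1 hρ.2
  have ha1 : Summable fun k => M |a k| := by simpa using ha.summable_div 1
  set σ : ℝ := ∑' k, M |a k|
  have hσ : 0 ≤ σ := tsum_nonneg fun k => hM.nonneg (abs_nonneg _)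
  refine ⟨1 + σ, by positivity, ?_⟩
  calc ∑' k, M (|a k| / (1 + σ)) ≤ ∑' k, (1 + σ)⁻¹ * M |a k| := by
        refine (ha.summable_div _).tsum_le_tsum (fun k => ?_) (ha1.mul_left _)
        rw [div_eq_inv_mul]
        exact hM.map_mul_le (by positivity) (inv_le_one_of_one_le₀ (by linarith)) (abs_nonneg _)
    _ = (1 + σ)⁻¹ * σ := tsum_mul_left
    _ ≤ 1 := by rw [inv_mul_le_one₀ (by positivity)]; linarith

/-- The unit ball of the Köthe dual of `h_M`: the functionals `b ↦ ∑ k, g k * b k` bounded by `1`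
on the unit ball of `h_M`, tested on finite partial sums so that no convergence is presupposed. -/
def dualBall (M : ℝ → ℝ) : Set (ℕ → ℝ) :=
  {g | ∀ (b : ℕ → ℝ) (S : Finset ℕ), ∑ k ∈ S, M |b k| ≤ 1 → |∑ k ∈ S, g k * b k| ≤ 1}

theorem isHereditary_dualBall (hM : IsOrlicz M) : IsHereditary (dualBall M) := by
  classical
  intro g hg s b S hb
  have hsum : ∑ k ∈ S, s.indicator g k * b k = ∑ k ∈ S with k ∈ s, g k * b k := by
    rw [Finset.sum_filter]
    exact Finset.sum_congr rfl fun k _ => by simp only [Set.indicator_apply, ite_mul, zero_mul]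
  rw [hsum]
  refine hg b _ (le_trans ?_ hb)
  exact Finset.sum_le_sum_of_subset_of_nonneg (Finset.filter_subset _ _)
    fun k _ _ => hM.nonneg (abs_nonneg _)

section dualBall

variable {g a : ℕ → ℝ}

theorem abs_sum_mul_le_of_mem_dualBall (hg : g ∈ dualBall M) {ρ : ℝ} (hρ : 0 < ρ) {S : Finset ℕ}
    (h : ∑ k ∈ S, M (|a k| / ρ) ≤ 1) : |∑ k ∈ S, g k * a k| ≤ ρ := by
  have hle := hg (fun k => a k / ρ) S (by simpa only [abs_div, abs_of_pos hρ] using h)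
  simpa only [mul_div_assoc', ← Finset.sum_div, abs_div, abs_of_pos hρ, div_le_one hρ] using hle

theorem exists_forall_disjoint_abs_sum_mul_le (ha : MemHM M a) {ε : ℝ} (hε : 0 < ε) :
    ∃ s : Finset ℕ, ∀ t, Disjoint t s → ∀ g ∈ dualBall M, |∑ k ∈ t, g k * a k| ≤ ε := by
  obtain ⟨s, hs⟩ := summable_iff_vanishing_norm.1 (ha.summable_div ε) 1 one_pos
  exact ⟨s, fun t ht g hg =>
    abs_sum_mul_le_of_mem_dualBall hg hε ((le_abs_self _).trans (hs t ht).le)⟩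

theorem summable_mul_of_mem_dualBall (ha : MemHM M a) (hg : g ∈ dualBall M) :
    Summable fun k => g k * a k := by
  refine summable_iff_vanishing_norm.2 fun ε hε => ?_
  obtain ⟨s, hs⟩ := exists_forall_disjoint_abs_sum_mul_le ha (half_pos hε)
  exact ⟨s, fun t ht => (hs t ht g hg).trans_lt (half_lt_self hε)⟩

theorem tendstoUniformlyOn_sum_mul_dualBall (ha : MemHM M a) :
    TendstoUniformlyOn (fun (S : Finset ℕ) (g : ℕ → ℝ) => ∑ k ∈ S, g k * a k)
      (fun g => ∑' k, g k * a k) atTop (dualBall M) := by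
  refine Metric.tendstoUniformlyOn_iff.2 fun ε hε => ?_
  obtain ⟨s, hs⟩ := exists_forall_disjoint_abs_sum_mul_le ha (half_pos hε)
  filter_upwards [eventually_ge_atTop s] with S hS g hg
  refine lt_of_le_of_lt ?_ (half_lt_self hε)
  refine le_of_tendsto ((summable_mul_of_mem_dualBall ha hg).hasSum.dist tendsto_const_nhds) ?_
  filter_upwards [eventually_ge_atTop S] with T hT
  rw [Real.dist_eq, ← Finset.sum_sdiff hT, add_sub_cancel_right]
  exact hs _ (Finset.sdiff_disjoint.mono_right hS) g hg

theorem continuousOn_tsum_mul_dualBall (ha : MemHM M a) :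
    ContinuousOn (fun g : ℕ → ℝ => ∑' k, g k * a k) (dualBall M) :=
  (tendstoUniformlyOn_sum_mul_dualBall ha).continuousOn (.of_forall fun S => by fun_prop)

theorem abs_tsum_mul_le_orliczNorm (hM : IsOrlicz M) (ha : MemHM M a) (hg : g ∈ dualBall M) :
    |∑' k, g k * a k| ≤ orliczNorm M a := by
  refine le_orliczNorm hM ha fun ρ hρ h => ?_
  refine le_of_tendsto (summable_mul_of_mem_dualBall ha hg).hasSum.abs (.of_forall fun S => ?_)
  refine abs_sum_mul_le_of_mem_dualBall hg hρ (le_trans ?_ h)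
  exact (ha.summable_div ρ).sum_le_tsum S fun k _ => hM.nonneg (by positivity)

end dualBall

/-- The functionals in `K` norm `h_M` up to the factor `c`. It suffices to detect finitely supported
vectors outside the unit ball by functionals with no larger support. -/
def IsNorming (M : ℝ → ℝ) (c : ℝ) (K : Set (ℕ → ℝ)) : Prop :=
  ∀ (b : ℕ → ℝ) (S : Finset ℕ), 1 < ∑ k ∈ S, M |b k| →
    ∃ g ∈ K, Function.support g ⊆ S ∧ c ≤ ∑ k ∈ S, g k * b k

theorem IsNorming.mul_orliczNorm_le (hM : IsOrlicz M) {c : ℝ} (hc : 0 < c) {K : Set (ℕ → ℝ)}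
    (hK : IsNorming M c K) {a : ℕ → ℝ} {r : ℝ} (hr : 0 ≤ r)
    (h : ∀ g ∈ K, |∑' k, g k * a k| ≤ r) : c * orliczNorm M a ≤ r := by
  rw [← le_div_iff₀' hc]
  refine le_of_forall_gt_imp_ge_of_dense fun ρ hρ => ?_
  have hρ0 : 0 < ρ := (div_nonneg hr hc.le).trans_lt hρ
  refine orliczNorm_le hρ0
    (Real.tsum_le_of_sum_le (fun k => hM.nonneg (by positivity)) fun S => ?_)
  by_contra! hS
  obtain ⟨g, hgK, hgS, hcg⟩ := hK (fun k => a k / ρ) S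
    (by simpa only [abs_div, abs_of_pos hρ0] using hS)
  have hsum : ∑' k, g k * a k = ∑ k ∈ S, g k * a k := tsum_eq_sum fun k hk => by
    rw [Function.notMem_support.1 fun hk' => hk (hgS hk'), zero_mul]
  have hle : c * ρ ≤ r := by
    simp only [mul_div_assoc', ← Finset.sum_div] at hcg
    rw [le_div_iff₀ hρ0, ← hsum] at hcg
    exact hcg.trans ((le_abs_self _).trans (h g hgK))
  exact hle.not_gt ((div_lt_iff₀' hc).1 hρ)

theorem embedsHM_of_isNorming (hM : IsOrlicz M) {α : Ordinal} (hα : α ≠ 0) {K : Set (ℕ → ℝ)}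
    (hK : IsOrdinalImage α K) (hKM : K ⊆ dualBall M) {c : ℝ} (hc : 0 < c)
    (hnorm : IsNorming M c K) : EmbedsHM M α := by
  classical
  obtain ⟨Φ, rfl⟩ := hK.exists_continuousMap hα
  have : CompactSpace (Set.Iic α) := by
    rw [← isCompact_iff_compactSpace, ← Set.Icc_bot]
    exact isCompact_Icc
  have hΦ (x : Set.Iic α) : Φ x ∈ dualBall M := hKM (Set.mem_range_self x)
  let p (a : ℕ → ℝ) (x : Set.Iic α) : ℝ := ∑' k, Φ x k * a k
  have hp {a : ℕ → ℝ} (ha : MemHM M a) : Continuous (p a) :=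
    (continuousOn_tsum_mul_dualBall ha).comp_continuous Φ.continuous hΦ
  have hsum {a : ℕ → ℝ} (ha : MemHM M a) (x : Set.Iic α) : Summable fun k => Φ x k * a k :=
    summable_mul_of_mem_dualBall ha (hΦ x)
  let T (a : ℕ → ℝ) : COrd α :=
    if h : Continuous (p a) then BoundedContinuousFunction.mkOfCompact ⟨p a, h⟩ else 0
  have hT {a : ℕ → ℝ} (h : Continuous (p a)) (x : Set.Iic α) : T a x = p a x := by
    simp only [T, dif_pos h, BoundedContinuousFunction.mkOfCompact_apply, ContinuousMap.coe_mk]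
  refine ⟨T, fun a b ha hb => ?_, fun r a ha => ?_, c, hc, 1, one_pos, fun a ha => ⟨?_, ?_⟩⟩
  · have hadd : p (a + b) = p a + p b := funext fun x => by
      simp only [p, Pi.add_apply, mul_add, (hsum ha x).tsum_add (hsum hb x)]
    ext x
    rw [hT (hadd ▸ (hp ha).add (hp hb)), BoundedContinuousFunction.add_apply, hT (hp ha),
      hT (hp hb), hadd, Pi.add_apply]
  · have hsmul : p (r • a) = r • p a := funext fun x => by
      simp only [p, Pi.smul_apply, _root_.smul_eq_mul, mul_left_comm _ r, tsum_mul_left]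
    ext x
    rw [hT (hsmul ▸ (hp ha).const_smul r), BoundedContinuousFunction.smul_apply, hT (hp ha),
      hsmul, Pi.smul_apply]
  · refine hnorm.mul_orliczNorm_le hM hc (norm_nonneg _) ?_
    rintro _ ⟨x, rfl⟩
    simpa only [hT (hp ha), Real.norm_eq_abs] using (T a).norm_coe_le_norm x
  · rw [one_mul, BoundedContinuousFunction.norm_le ((abs_nonneg _).trans
      (abs_tsum_mul_le_orliczNorm hM ha (hΦ ⟨α, Set.self_mem_Iic⟩)))]
    intro x
    rw [hT (hp ha), Real.norm_eq_abs]
    exact abs_tsum_mul_le_orliczNorm hM ha (hΦ x)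

end OrliczDuality

section FiniteSums

theorem sum_half_pow_add_two_le (S : Finset ℕ) : ∑ k ∈ S, (1 / 2 : ℝ) ^ (k + 2) ≤ 1 / 2 := by
  simp only [pow_add, ← Finset.sum_mul]
  have := summable_geometric_two.sum_le_tsum S fun k _ => by positivity
  rw [tsum_geometric_two] at this
  linarith

theorem exists_half_pow_lt_sum_fiber {ι : Type*} {S : Finset ι} {f : ι → ℝ} (l : ι → ℕ)
    (h : 1 / 2 < ∑ k ∈ S, f k) : ∃ i, (1 / 2 : ℝ) ^ (i + 2) < ∑ k ∈ S with l k = i, f k := by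
  by_contra! hle
  refine h.not_ge ?_
  rw [← Finset.sum_fiberwise_of_maps_to fun k hk => Finset.mem_image_of_mem l hk]
  exact (Finset.sum_le_sum fun i _ => hle i).trans (sum_half_pow_add_two_le _)

theorem one_le_sum_min_one {ι : Type*} {S : Finset ι} {f : ι → ℝ} (hf : ∀ k ∈ S, 0 ≤ f k)
    (h : 1 ≤ ∑ k ∈ S, f k) : 1 ≤ ∑ k ∈ S, min 1 (f k) := by
  by_cases h1 : ∃ k ∈ S, 1 ≤ f k
  · obtain ⟨k, hk, hk1⟩ := h1
    calc (1 : ℝ) = min 1 (f k) := (min_eq_left hk1).symm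
      _ ≤ ∑ k ∈ S, min 1 (f k) :=
        Finset.single_le_sum (fun j hj => le_min zero_le_one (hf j hj)) hk
  · push Not at h1
    rwa [Finset.sum_congr rfl fun k hk => min_eq_right (h1 k hk).le]

theorem exists_subset_half_le_sum_le_one {ι : Type*} {S : Finset ι} {f : ι → ℝ}
    (hf : ∀ k ∈ S, f k ≤ 1) (h : 1 / 2 ≤ ∑ k ∈ S, f k) :
    ∃ F ⊆ S, 1 / 2 ≤ ∑ k ∈ F, f k ∧ ∑ k ∈ F, f k ≤ 1 := by
  classical
  induction S using Finset.induction_on with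
  | empty => norm_num at h
  | insert a S ha ih =>
    by_cases hS : 1 / 2 ≤ ∑ k ∈ S, f k
    · obtain ⟨F, hFS, hF⟩ := ih (fun k hk => hf k (Finset.mem_insert_of_mem hk)) hS
      exact ⟨F, hFS.trans (Finset.subset_insert a S), hF⟩
    · by_cases hfa : 1 / 2 ≤ f a
      · exact ⟨{a}, by simp, by simpa using hfa, by simpa using hf a (Finset.mem_insert_self a S)⟩
      · refine ⟨insert a S, subset_rfl, h, ?_⟩
        rw [Finset.sum_insert ha]
        linarith

theorem exists_half_pow_near {x : ℝ} (hx : 0 < x) :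
    ∃ q : ℕ, min 1 x ≤ (1 / 2 : ℝ) ^ q ∧ (1 / 2 : ℝ) ^ q ≤ 2 * x := by
  rcases le_total x 1 with h | h
  · obtain ⟨q, hq, hq'⟩ := exists_nat_pow_near_of_lt_one hx h one_half_pos one_half_lt_one
    rw [pow_succ] at hq
    exact ⟨q, min_le_of_right_le hq', by linarith⟩
  · exact ⟨0, by simp, by linarith [pow_zero (1 / 2 : ℝ)]⟩

end FiniteSums

section NormingFamily

variable {M : ℝ → ℝ}

theorem IsOrlicz.exists_dyadic_block (hM : IsOrlicz M) {ι : Type*} {S : Finset ι} {y : ι → ℝ}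
    (hy : ∀ k ∈ S, 0 < y k) (h : 1 ≤ ∑ k ∈ S, M (y k)) :
    ∃ F ⊆ S, ∃ q : ι → ℕ,
      (∀ k ∈ F, min 1 (y k) ≤ (1 / 2 : ℝ) ^ q k ∧ (1 / 2 : ℝ) ^ q k ≤ 2 * y k) ∧
        1 / 2 ≤ ∑ k ∈ F, M ((1 / 2) ^ q k) ∧ ∑ k ∈ F, M ((1 / 2) ^ q k) ≤ 1 := by
  choose! q hq using fun k (hk : k ∈ S) => exists_half_pow_near (hy k hk)
  have hle (k : ι) : M ((1 / 2) ^ q k) ≤ 1 := by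
    refine (hM.mono ?_ ?_ (pow_le_one₀ (by norm_num) (by norm_num))).trans_eq hM.one
    all_goals exact Set.mem_Ici.2 (by positivity)
  have hmin (k) (hk : k ∈ S) : min 1 (M (y k)) ≤ M ((1 / 2) ^ q k) := by
    have hyk := (hy k hk).le
    calc min 1 (M (y k)) = M (min 1 (y k)) := by
          rw [hM.mono.map_min (Set.mem_Ici.2 zero_le_one) (Set.mem_Ici.2 hyk), hM.one]
      _ ≤ M ((1 / 2) ^ q k) := hM.mono (Set.mem_Ici.2 (le_min zero_le_one hyk))
          (Set.mem_Ici.2 (by positivity)) (hq k hk).1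
  have hsum : 1 ≤ ∑ k ∈ S, M ((1 / 2) ^ q k) :=
    (one_le_sum_min_one (fun k hk => hM.nonneg (hy k hk).le) h).trans (Finset.sum_le_sum hmin)
  obtain ⟨F, hFS, hF⟩ := exists_subset_half_le_sum_le_one (fun k _ => hle k)
    (one_half_lt_one.le.trans hsum)
  exact ⟨F, hFS, q, fun k hk => hq k (hFS hk), hF⟩

theorem mem_dualBall_of_abs_le (hM : IsOrlicz M) {F : Finset ℕ} {t g : ℕ → ℝ}
    (ht : ∀ k ∈ F, 0 < t k) (hF : ∑ k ∈ F, M (t k) ≤ 1) (hgF : Function.support g ⊆ F)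
    (hg : ∀ k ∈ F, |g k| ≤ M (t k) / (2 * t k)) : g ∈ dualBall M := by
  intro b S hb
  have hterm (k) (hk : k ∈ F) : |g k * b k| ≤ (M (t k) + M |b k|) / 2 := by
    have hyoung := hM.slope_mul_le (ht k hk) (abs_nonneg (b k))
    calc |g k * b k| = |g k| * |b k| := abs_mul _ _
      _ ≤ M (t k) / (2 * t k) * |b k| := by gcongr; exact hg k hk
      _ = M (t k) / t k * |b k| / 2 := by ring
      _ ≤ (M (t k) + M |b k|) / 2 := by gcongr
  have hFS : ∑ k ∈ S ∩ F, M (t k) ≤ 1 := (Finset.sum_le_sum_of_subset_of_nonneg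
    Finset.inter_subset_right fun k hk _ => hM.nonneg (ht k hk).le).trans hF
  have hbS : ∑ k ∈ S ∩ F, M |b k| ≤ 1 := (Finset.sum_le_sum_of_subset_of_nonneg
    Finset.inter_subset_left fun k _ _ => hM.nonneg (abs_nonneg _)).trans hb
  calc |∑ k ∈ S, g k * b k| = |∑ k ∈ S ∩ F, g k * b k| := by
        refine congrArg _ (Finset.sum_subset Finset.inter_subset_left fun k hkS hk => ?_).symm
        rw [Function.notMem_support.1 fun hk' => hk (Finset.mem_inter.2 ⟨hkS, hgF hk'⟩), zero_mul]
    _ ≤ ∑ k ∈ S ∩ F, |g k * b k| := Finset.abs_sum_le_sum_abs _ _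
    _ ≤ ∑ k ∈ S ∩ F, (M (t k) + M |b k|) / 2 :=
        Finset.sum_le_sum fun k hk => hterm k (Finset.mem_inter.1 hk).2
    _ = (∑ k ∈ S ∩ F, M (t k) + ∑ k ∈ S ∩ F, M |b k|) / 2 := by
        rw [← Finset.sum_div, Finset.sum_add_distrib]
    _ ≤ 1 := by linarith

/-- Thresholds `τ i`, so small that dilating by `B` multiplies `M s` by at least `2 ^ (i + 2)` once
`s` lies below `τ 0, …, τ (i - 1)`. They sort the entries of a sequence into levels: `i` is the
level of `s` when `τ i` is the first threshold not above `s`. -/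
structure IsScale (M : ℝ → ℝ) (B : ℝ) (τ : ℕ → ℝ) : Prop where
  one_le : 1 ≤ B
  pos : ∀ i, 0 < τ i
  le_half_pow : ∀ i, τ i ≤ (1 / 2) ^ (i + 2)
  growth : ∀ i s, 0 < s → (∀ j < i, s < τ j) → 2 ^ (i + 2) * M s ≤ M (B * s)

theorem IsOrlicz.eventually_mul_le (hM : IsOrlicz M) {η : ℝ} (hη : 0 < η)
    (hlim : Tendsto (fun t => M (η * t) / M t) (𝓝[>] (0 : ℝ)) (𝓝 0)) {C : ℝ} (hC : 0 < C) :
    ∀ᶠ s in 𝓝[>] (0 : ℝ), C * M s ≤ M (η⁻¹ * s) := by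
  have hdil : Tendsto (fun s : ℝ => η⁻¹ * s) (𝓝[>] 0) (𝓝[>] 0) := by
    refine tendsto_nhdsWithin_iff.2 ⟨?_, ?_⟩
    · simpa using (tendsto_id.const_mul η⁻¹ : Tendsto (fun s : ℝ => η⁻¹ * s) (𝓝 0) _).mono_left
        nhdsWithin_le_nhds
    · filter_upwards [self_mem_nhdsWithin] with s hs
      exact mul_pos (inv_pos.2 hη) hs
  filter_upwards [(hlim.comp hdil).eventually_lt_const (inv_pos.2 hC), self_mem_nhdsWithin]
    with s hs hs0
  have hpos : 0 < M (η⁻¹ * s) := hM.pos _ (mul_pos (inv_pos.2 hη) hs0)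
  rw [Function.comp_apply, mul_inv_cancel_left₀ hη.ne', div_lt_iff₀ hpos] at hs
  rw [← le_inv_mul_iff₀ hC]
  exact hs.le

theorem IsOrlicz.exists_isScale (hM : IsOrlicz M) {η : ℝ} (hη : 0 < η)
    (hlim : Tendsto (fun t => M (η * t) / M t) (𝓝[>] (0 : ℝ)) (𝓝 0)) :
    ∃ B τ, IsScale M B τ := by
  have hδ (i : ℕ) : ∃ δ > 0, ∀ s ∈ Set.Ioo 0 δ, 2 ^ (i + 3) * M s ≤ M (η⁻¹ * s) :=
    mem_nhdsGT_iff_exists_Ioo_subset.1 (hM.eventually_mul_le hη hlim (by positivity))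
  choose δ hδ0 hδM using hδ
  have hmono {c s : ℝ} (hc : 0 ≤ c) (hcB : c ≤ max 4 η⁻¹) (hs : 0 < s) :
      M (c * s) ≤ M (max 4 η⁻¹ * s) :=
    hM.mono (Set.mem_Ici.2 (by positivity)) (Set.mem_Ici.2 (by positivity)) (by gcongr)
  refine ⟨max 4 η⁻¹, fun i => min (δ i) ((1 / 2) ^ (i + 2)), le_max_of_le_left (by norm_num),
    fun i => lt_min (hδ0 i) (by positivity), fun i => min_le_right _ _, ?_⟩
  rintro (_ | i) s hs hsτ
  · have h4 : M s ≤ 1 / 4 * M (4 * s) := by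
      simpa using hM.map_mul_le (s := 1 / 4) (t := 4 * s) (by norm_num) (by norm_num)
        (by positivity)
    linarith [hmono (by norm_num) (le_max_left 4 η⁻¹) hs]
  · exact (hδM i s ⟨hs, (hsτ i i.lt_succ_self).trans_le (min_le_left _ _)⟩).trans
      (hmono (inv_pos.2 hη).le (le_max_right _ _) hs)

theorem IsScale.exists_level (hM : IsOrlicz M) {B : ℝ} {τ : ℕ → ℝ} (hτ : IsScale M B τ)
    {b : ℕ → ℝ} {S : Finset ℕ} (h : 1 < ∑ k ∈ S, M |b k|) :
    ∃ i, ∃ A ⊆ S, (∀ k ∈ A, i ≤ k ∧ τ i ≤ |b k|) ∧ 1 ≤ ∑ k ∈ A, M (B * |b k|) := by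
  have hsmall : ∑ k ∈ S with ¬ τ k ≤ |b k|, M |b k| ≤ 1 / 2 := by
    refine (Finset.sum_le_sum fun k hk => ?_).trans (sum_half_pow_add_two_le _)
    have hb : |b k| ≤ (1 / 2) ^ (k + 2) :=
      (not_le.1 (Finset.mem_filter.1 hk).2).le.trans (hτ.le_half_pow k)
    refine le_trans ?_ hb
    simpa [hM.one] using hM.map_mul_le (abs_nonneg (b k))
      (hb.trans (pow_le_one₀ (by norm_num) (by norm_num))) zero_le_one
  have hlarge : 1 / 2 < ∑ k ∈ S with τ k ≤ |b k|, M |b k| := by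
    linarith [Finset.sum_filter_add_sum_filter_not S (fun k => τ k ≤ |b k|) fun k => M |b k|]
  let l (k : ℕ) : ℕ := sInf {j | τ j ≤ |b k|}
  obtain ⟨i, hi⟩ := exists_half_pow_lt_sum_fiber l hlarge
  set A : Finset ℕ := {k ∈ {k ∈ S | τ k ≤ |b k|} | l k = i}
  have hA (k) (hk : k ∈ A) : k ∈ S ∧ τ k ≤ |b k| ∧ l k = i := by
    simpa only [A, Finset.mem_filter, and_assoc] using hk
  refine ⟨i, A, fun k hk => (hA k hk).1, fun k hk => ?_, ?_⟩
  · obtain ⟨-, hτk, rfl⟩ := hA k hk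
    exact ⟨Nat.sInf_le hτk, Nat.sInf_mem (s := {j | τ j ≤ |b k|}) ⟨k, hτk⟩⟩
  · calc (1 : ℝ) = 2 ^ (i + 2) * (1 / 2) ^ (i + 2) := by rw [← mul_pow]; norm_num
      _ ≤ 2 ^ (i + 2) * ∑ k ∈ A, M |b k| := by gcongr
      _ = ∑ k ∈ A, 2 ^ (i + 2) * M |b k| := Finset.mul_sum _ _ _
      _ ≤ ∑ k ∈ A, M (B * |b k|) := Finset.sum_le_sum fun k hk => by
        obtain ⟨-, hτk, rfl⟩ := hA k hk
        exact hτ.growth _ _ ((hτ.pos k).trans_le hτk) fun j hj =>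
          not_le.1 (Nat.notMem_of_lt_sInf hj)

/-- The possible entries of a step functional whose steps are not below `τ`: zero and the numbers
`± M t / (2 * t)` with `t ≥ τ` dyadic. -/
def dyadicSlopes (M : ℝ → ℝ) (τ : ℝ) : Set ℝ :=
  insert 0 (Set.image2 (fun (q : ℕ) (σ : SignType) => σ * (M ((1 / 2) ^ q) / (2 * (1 / 2) ^ q)))
    {q | τ ≤ (1 / 2) ^ q} Set.univ)

theorem finite_dyadicSlopes (M : ℝ → ℝ) {τ : ℝ} (hτ : 0 < τ) : (dyadicSlopes M τ).Finite := by
  obtain ⟨N, hN⟩ := exists_pow_lt_of_lt_one hτ (one_half_lt_one (α := ℝ))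
  have hfin : {q : ℕ | τ ≤ (1 / 2) ^ q}.Finite := (Set.finite_Iio N).subset fun q hq => by
    by_contra h
    exact hN.not_ge (hq.trans (pow_le_pow_of_le_one (by norm_num) (by norm_num) (not_lt.1 h)))
  exact (hfin.image2 _ Set.finite_univ).insert 0

/-- The functionals of level `i` in the unit ball of the dual: steps not below `τ i`, no entry
before index `i`, and boundedly many nonzero entries. The summand `i` in the bound only serves to
make it unbounded in `i`. -/
def stepFamily (M : ℝ → ℝ) (τ : ℕ → ℝ) (i : ℕ) : Set (ℕ → ℝ) :=
  {g ∈ dualBall M | (∀ j < i, g j = 0) ∧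
    (Function.support g).encard ≤ (⌈1 / M (τ i)⌉₊ + i : ℕ) ∧ ∀ k, g k ∈ dyadicSlopes M (τ i)}

theorem zero_mem_stepFamily (M : ℝ → ℝ) (τ : ℕ → ℝ) (i : ℕ) : 0 ∈ stepFamily M τ i :=
  ⟨fun b S _ => by simp, fun _ _ => rfl, by simp, fun _ => Set.mem_insert _ _⟩

theorem isHereditary_stepFamily (hM : IsOrlicz M) (τ : ℕ → ℝ) (i : ℕ) :
    IsHereditary (stepFamily M τ i) := by
  classical
  rintro g ⟨hg, hg0, hcard, hD⟩ s
  refine ⟨isHereditary_dualBall hM g hg s, fun j hj => by simp [Set.indicator_apply, hg0 j hj],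
    (Set.encard_le_encard ?_).trans hcard, fun k => ?_⟩
  · rw [Set.support_indicator]
    exact Set.inter_subset_right
  · by_cases hk : k ∈ s
    · simpa only [Set.indicator_of_mem hk] using hD k
    · exact Or.inl (Set.indicator_of_notMem hk g)

theorem isOrdinalImage_iUnion_stepFamily (hM : IsOrlicz M) {τ : ℕ → ℝ} (hτ : ∀ i, 0 < τ i) :
    IsOrdinalImage (ω ^ (ω : Ordinal.{v})) (insert 0 (⋃ i, stepFamily M τ i)) := by
  refine IsOrdinalImage.omega0_opow_omega0 (fun i => Nat.le_add_left i ⌈1 / M (τ i)⌉₊)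
    (fun i => ?_) (tendsto_smallSets_nhds_zero tendsto_id fun i g hg => hg.2.1)
  exact (isHereditary_stepFamily hM τ i).isOrdinalImage (finite_dyadicSlopes M (hτ i))
    ⟨0, zero_mem_stepFamily M τ i⟩ (fun g hg => hg.2.2.2) fun g hg => hg.2.2.1

theorem iUnion_stepFamily_subset_dualBall (M : ℝ → ℝ) (τ : ℕ → ℝ) :
    insert 0 (⋃ i, stepFamily M τ i) ⊆ dualBall M :=
  Set.insert_subset (zero_mem_stepFamily M τ 0).1 (Set.iUnion_subset fun _ _ hg => hg.1)

/-- The functional supported on `F` with entries `sign (b k) * M t / (2 * t)`, where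
`t = (1 / 2) ^ q k`. It is almost norming for `b` when `t` is comparable to `|b k|`. -/
noncomputable def stepFunctional (M : ℝ → ℝ) (F : Finset ℕ) (q : ℕ → ℕ) (b : ℕ → ℝ) : ℕ → ℝ :=
  (F : Set ℕ).indicator fun k => SignType.sign (b k) * (M ((1 / 2) ^ q k) / (2 * (1 / 2) ^ q k))

section stepFunctional

variable {F : Finset ℕ} {q : ℕ → ℕ} {b : ℕ → ℝ}

theorem support_stepFunctional_subset : Function.support (stepFunctional M F q b) ⊆ F :=
  Set.support_indicator_subset

theorem stepFunctional_mem_dualBall (hM : IsOrlicz M) (hF : ∑ k ∈ F, M ((1 / 2) ^ q k) ≤ 1) :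
    stepFunctional M F q b ∈ dualBall M := by
  refine mem_dualBall_of_abs_le hM (t := fun k => (1 / 2) ^ q k) (fun k _ => by positivity) hF
    support_stepFunctional_subset fun k hk => ?_
  have hslope : 0 ≤ M ((1 / 2) ^ q k) / (2 * (1 / 2) ^ q k) :=
    div_nonneg (hM.nonneg (by positivity)) (by positivity)
  rw [stepFunctional, Set.indicator_of_mem (Finset.mem_coe.2 hk), abs_mul, abs_of_nonneg hslope]
  refine mul_le_of_le_one_left hslope ?_
  cases SignType.sign (b k) <;> simp

theorem stepFunctional_mem_stepFamily (hM : IsOrlicz M) {τ : ℕ → ℝ} {i : ℕ} (hτ : 0 < τ i)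
    (hiF : ∀ k ∈ F, i ≤ k) (hq : ∀ k ∈ F, τ i ≤ (1 / 2) ^ q k)
    (hF : ∑ k ∈ F, M ((1 / 2) ^ q k) ≤ 1) : stepFunctional M F q b ∈ stepFamily M τ i := by
  refine ⟨stepFunctional_mem_dualBall hM hF, fun j hj => ?_, ?_, fun k => ?_⟩
  · exact Set.indicator_of_notMem (fun h => (hiF j h).not_gt hj) _
  · have hcard : F.card * M (τ i) ≤ 1 := by
      rw [← _root_.nsmul_eq_mul]
      refine (Finset.card_nsmul_le_sum F _ _ fun k hk => ?_).trans hF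
      exact hM.mono (Set.mem_Ici.2 hτ.le) (Set.mem_Ici.2 (by positivity)) (hq k hk)
    refine (Set.encard_le_encard support_stepFunctional_subset).trans ?_
    rw [Set.encard_coe_eq_coe_finsetCard, Nat.cast_le]
    refine le_add_right (Nat.cast_le.1 (le_trans ?_ (Nat.le_ceil (1 / M (τ i)))))
    rwa [le_div_iff₀ (hM.pos _ hτ)]
  · by_cases hk : k ∈ F
    · refine Or.inr ⟨q k, hq k hk, SignType.sign (b k), trivial, ?_⟩
      rw [stepFunctional, Set.indicator_of_mem (Finset.mem_coe.2 hk)]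
    · exact Or.inl (Set.indicator_of_notMem hk _)

theorem div_le_sum_stepFunctional_mul (hM : IsOrlicz M) {C : ℝ} (hC : 0 < C) {S : Finset ℕ}
    (hFS : F ⊆ S) (hq : ∀ k ∈ F, (1 / 2) ^ q k ≤ C * |b k|) :
    (∑ k ∈ F, M ((1 / 2) ^ q k)) / (2 * C) ≤ ∑ k ∈ S, stepFunctional M F q b k * b k := by
  rw [← Finset.sum_subset hFS fun k _ hk => by
    rw [stepFunctional, Set.indicator_of_notMem (by simpa using hk), zero_mul], Finset.sum_div]
  refine Finset.sum_le_sum fun k hk => ?_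
  rw [stepFunctional, Set.indicator_of_mem (Finset.mem_coe.2 hk)]
  have ht : (0 : ℝ) < (1 / 2) ^ q k := by positivity
  have hMt : 0 ≤ M ((1 / 2) ^ q k) := hM.nonneg ht.le
  have hinv : 1 / (2 * C) ≤ |b k| / (2 * (1 / 2) ^ q k) := by
    rw [div_le_div_iff₀ (by positivity) (by positivity)]
    linarith [hq k hk]
  calc M ((1 / 2) ^ q k) / (2 * C) = M ((1 / 2) ^ q k) * (1 / (2 * C)) := by ring
    _ ≤ M ((1 / 2) ^ q k) * (|b k| / (2 * (1 / 2) ^ q k)) := by gcongr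
    _ = SignType.sign (b k) * (M ((1 / 2) ^ q k) / (2 * (1 / 2) ^ q k)) * b k := by
      rw [← sign_mul_self (b k)]; ring

end stepFunctional

theorem IsScale.isNorming_iUnion_stepFamily (hM : IsOrlicz M) {B : ℝ} {τ : ℕ → ℝ}
    (hτ : IsScale M B τ) : IsNorming M (1 / (8 * B)) (insert 0 (⋃ i, stepFamily M τ i)) := by
  intro b S hS
  have hB : 0 < B := zero_lt_one.trans_le hτ.one_le
  obtain ⟨i, A, hAS, hA, hsum⟩ := hτ.exists_level hM hS
  have hb (k) (hk : k ∈ A) : 0 < B * |b k| := mul_pos hB ((hτ.pos i).trans_le (hA k hk).2)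
  obtain ⟨F, hFA, q, hq, hhalf, hone⟩ := hM.exists_dyadic_block hb hsum
  have hτq (k) (hk : k ∈ F) : τ i ≤ (1 / 2) ^ q k := by
    refine (le_min ?_ ?_).trans (hq k hk).1
    · exact (hτ.le_half_pow i).trans (pow_le_one₀ (by norm_num) (by norm_num))
    · exact (hA k (hFA hk)).2.trans (le_mul_of_one_le_left (abs_nonneg _) hτ.one_le)
  refine ⟨stepFunctional M F q b, Or.inr (Set.mem_iUnion.2 ⟨i, ?_⟩),
    support_stepFunctional_subset.trans (Finset.coe_subset.2 (hFA.trans hAS)), ?_⟩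
  · exact stepFunctional_mem_stepFamily hM (hτ.pos i) (fun k hk => (hA k (hFA hk)).1) hτq hone
  · calc 1 / (8 * B) = 1 / 2 / (2 * (2 * B)) := by ring
      _ ≤ (∑ k ∈ F, M ((1 / 2) ^ q k)) / (2 * (2 * B)) := by gcongr
      _ ≤ ∑ k ∈ S, stepFunctional M F q b k * b k :=
        div_le_sum_stepFunctional_mul hM (by positivity) (hFA.trans hAS) fun k hk => by
          rw [mul_assoc]; exact (hq k hk).2

end NormingFamily

/-- Let `M` be a nondegenerate Orlicz function such that `lim_{t→0} M(ηt)/M(t) = 0` for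
some `η > 0`.  Then the Orlicz sequence space `h_M` is isomorphic to a (closed)
subspace of `C(ω^ω)`. -/
theorem orlicz_embeds_in_C_omega_omega (M : ℝ → ℝ) (hM : IsOrlicz M)
    (η : ℝ) (hη : 0 < η)
    (hlim : Tendsto (fun t => M (η * t) / M t) (𝓝[>] (0 : ℝ)) (𝓝 0)) :
    EmbedsHM M (Ordinal.omega0 ^ Ordinal.omega0) := by
  obtain ⟨B, τ, hτ⟩ := hM.exists_isScale hη hlim
  have hB : 0 < B := zero_lt_one.trans_le hτ.one_le
  exact embedsHM_of_isNorming hM (opow_pos _ omega0_pos).ne'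
    (isOrdinalImage_iUnion_stepFamily hM hτ.pos) (iUnion_stepFamily_subset_dualBall M τ)
    (by positivity) (hτ.isNorming_iUnion_stepFamily hM)
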